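/- arXiv:2103.13521 — 3 statements merged into one kernel-verified Lean document; each statement's English description precedes it below -/
import Mathlib

section
/- Let P be a probability distribution over variables (X_v)_{v∈V} that is Markovian to a maximal directed ancestral graph G_0. Suppose that (a) P is converse pairwise Markovian to G_0, and (b) whenever there exists C ⊆ V∖{i,j} with i⫫j|C, then also i⫫j|an(i,j) (with an(i,j) computed in G_0). Then sk(G_0) = sk(G(P)) for every output G(P) of a natural constraint-based structure-learning algorithm. -/
open MeasureTheory ProbabilityTheory

/-! ## Mixed graphs, m-separation, and related graphical notions -/

/-- A mixed graph with arrows (`i → j`) and bidirected arcs (`i ↔ j`). -/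
structure MixedGraph (V : Type) where
  arrow : V → V → Prop
  arc : V → V → Prop

namespace MixedGraph

variable {V : Type} (G : MixedGraph V)

/-- `G.anc i j` : `i` is an ancestor of `j`, i.e. there is a directed path from `i` to `j`. -/
def anc (i j : V) : Prop := Relation.TransGen G.arrow i j

/-- Adjacency: there is some edge between `i` and `j`. -/
def adj (i j : V) : Prop := G.arrow i j ∨ G.arrow j i ∨ G.arc i j

/-- A directed ancestral graph: a simple mixed graph with arrows and arcs, no directed
cycle, and no arc one of whose endpoints is an ancestor of the other. -/
def IsDirectedAncestral : Prop :=
  (∀ i j, G.arc i j ↔ G.arc j i) ∧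
  (∀ i, ¬ G.arc i i) ∧
  (∀ i j, ¬ (G.arrow i j ∧ G.arrow j i)) ∧
  (∀ i j, ¬ (G.arrow i j ∧ G.arc i j)) ∧
  (∀ i, ¬ G.anc i i) ∧
  (∀ i j, G.arc i j → ¬ G.anc i j ∧ ¬ G.anc j i)

/-- A DAG: only arrows, and no directed cycle. -/
def IsDAG : Prop := (∀ i j, ¬ G.arc i j) ∧ (∀ i, ¬ G.anc i i)

/-- There is an edge between `i` and `j` with an arrowhead at `j`. -/
def headInto (i j : V) : Prop := G.arrow i j ∨ G.arc i j

/-- The inner node `b` of a tripath `⟨a,b,c⟩` is a collider. -/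
def collider (a b c : V) : Prop := G.headInto a b ∧ G.headInto c b

/-- The list of nodes `p` is a path which is connecting given `C` : consecutive nodes are
adjacent, no node is repeated, every collider inner node is in `C` or an ancestor of a node
in `C`, and every non-collider inner node is not in `C`. -/
def Connecting (C : Set V) (p : List V) : Prop :=
  p.Nodup ∧ p.Chain' G.adj ∧
  ∀ t, 0 < t → ∀ (h1 : t - 1 < p.length) (h2 : t < p.length) (h3 : t + 1 < p.length),
    (G.collider (p.get ⟨t-1, h1⟩) (p.get ⟨t, h2⟩) (p.get ⟨t+1, h3⟩) →
      p.get ⟨t, h2⟩ ∈ C ∨ ∃ c ∈ C, G.anc (p.get ⟨t, h2⟩) c) ∧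
    (¬ G.collider (p.get ⟨t-1, h1⟩) (p.get ⟨t, h2⟩) (p.get ⟨t+1, h3⟩) →
      p.get ⟨t, h2⟩ ∉ C)

/-- m-separation : `A ⊥ B | C` in `G` iff there is no connecting path between `A` and `B`
given `C`. -/
def mSep (A B C : Set V) : Prop :=
  ¬ ∃ p : List V, G.Connecting C p ∧
      (∃ a ∈ A, p.head? = some a) ∧ (∃ b ∈ B, p.getLast? = some b)

/-- Two graphs are Markov equivalent if they induce the same independence model by
m-separation. -/
def MarkovEquiv (H : MixedGraph V) : Prop :=
  ∀ A B C : Set V, Disjoint A B → Disjoint A C → Disjoint B C →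
    (G.mSep A B C ↔ H.mSep A B C)

/-- `G` is maximal: every pair of non-adjacent nodes is separated given some set. -/
def Maximal : Prop :=
  ∀ i j : V, i ≠ j → ¬ G.adj i j → ∃ C : Set V, i ∉ C ∧ j ∉ C ∧ G.mSep {i} {j} C

/-- `an(i,j) = (an(i) ∪ an(j)) \ {i,j}`. -/
def anSet (i j : V) : Set V :=
  {k | (G.anc k i ∨ G.anc k j) ∧ k ≠ i ∧ k ≠ j}

/-- The strict form of the minimal order of `G` : `a < b` iff `b` is an ancestor of `a`. -/
def minLt (a b : V) : Prop := G.anc b a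

end MixedGraph

/-! ## Abstract (singleton) independence relations and stability conditions -/

section IndependenceRelations

variable {V : Type}

/-- Ordered upward-stability of a singleton independence relation `ci` w.r.t. the strict
partial order `lt`. -/
def UpStab (lt : V → V → Prop) (ci : V → V → Set V → Prop) : Prop :=
  ∀ i j (C : Set V), i ≠ j → i ∉ C → j ∉ C → ci i j C →
    ∀ k, k ≠ i → k ≠ j → (lt i k ∨ lt j k) → ci i j (C ∪ {k})

/-- Ordered downward-stability of a singleton independence relation `ci` w.r.t. the strict
partial order `lt`. -/
def DownStab (lt : V → V → Prop) (ci : V → V → Set V → Prop) : Prop :=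
  ∀ i j (C : Set V), i ≠ j → i ∉ C → j ∉ C → ci i j C →
    ∀ k, ¬ lt i k → ¬ lt j k → (∀ l ∈ C \ {k}, ¬ lt l k) → ci i j (C \ {k})

/-- The skeleton of an independence relation: `i` and `j` are adjacent iff there is no `C`
with `⟨i,j|C⟩` an independence. -/
def skP (ci : V → V → Set V → Prop) (i j : V) : Prop :=
  i ≠ j ∧ ¬ ∃ C : Set V, i ∉ C ∧ j ∉ C ∧ ci i j C

/-- An output of a natural constraint-based structure-learning algorithm: a graph `H` whose
skeleton is the skeleton of the independence relation `ci`, obtained by directing the edges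
of that skeleton according to a `P`-compatible partial order (given here by its strict form
`lt`, required to coincide with the minimal order of `H`), w.r.t. which ordered upward- and
downward-stability hold. -/
def NaturalOutput (ci : V → V → Set V → Prop) (H : MixedGraph V) : Prop :=
  (∀ i j, H.adj i j ↔ skP ci i j) ∧
  ∃ lt : V → V → Prop, Irreflexive lt ∧ Transitive lt ∧
    (∀ i j, H.arrow i j ↔ (skP ci i j ∧ lt j i)) ∧
    (∀ i j, H.arc i j ↔ (skP ci i j ∧ ¬ lt i j ∧ ¬ lt j i)) ∧
    (∀ a b, lt a b ↔ H.minLt a b) ∧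
    UpStab lt ci ∧ DownStab lt ci

/-- Singleton-transitivity. -/
def SingletonTransitive (ci : V → V → Set V → Prop) : Prop :=
  ∀ i j k (C : Set V), i ≠ j → i ≠ k → j ≠ k → i ∉ C → j ∉ C → k ∉ C →
    ci i j C → ci i j (C ∪ {k}) → ci i k C ∨ ci j k C

/-- `ci` is V-unstable : there is a V-configuration `⟨i,k,j⟩` in the skeleton of `ci` and a
set `C` disjoint from `{i,j,k}` with `⟨i,j|C⟩` and `⟨i,j|C∪{k}⟩` independencies. -/
def VUnstable (ci : V → V → Set V → Prop) : Prop :=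
  ∃ i k j : V, ∃ C : Set V, i ≠ j ∧ i ≠ k ∧ j ≠ k ∧
    skP ci i k ∧ skP ci k j ∧ ¬ skP ci i j ∧
    i ∉ C ∧ j ∉ C ∧ k ∉ C ∧ ci i j C ∧ ci i j (C ∪ {k})

def VStable (ci : V → V → Set V → Prop) : Prop := ¬ VUnstable ci

/-- `ci` is path-unstable : there is a path `⟨i, i₁, …, i_r, k, j⟩` in the skeleton of `ci`
with `i,j` non-adjacent and every `i_n` adjacent to `j`, and a set `C` disjoint from
`{i,j,k}`, such that `⟨i,j | U∪C⟩` and `⟨i,j | U∪C∪{k}⟩` are independencies, where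
`U = {i₁,…,i_r}`. -/
def PathUnstable (ci : V → V → Set V → Prop) : Prop :=
  ∃ (i k j : V) (is : List V) (C : Set V),
    (i :: (is ++ [k, j])).Nodup ∧
    (i :: (is ++ [k, j])).Chain' (skP ci) ∧
    ¬ skP ci i j ∧
    (∀ m ∈ is, skP ci m j) ∧
    i ∉ C ∧ j ∉ C ∧ k ∉ C ∧
    ci i j ({m | m ∈ is} ∪ C) ∧ ci i j (({m | m ∈ is} ∪ C) ∪ {k})

def PathStable (ci : V → V → Set V → Prop) : Prop := ¬ PathUnstable ci

/-- The uniqueness property: all maximal directed ancestral graphs with the skeleton of `ci`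
w.r.t. (the minimal order of) which `ci` satisfies ordered upward- and downward-stability
are Markov equivalent. -/
def UniquenessProp (ci : V → V → Set V → Prop) : Prop :=
  ∀ H1 H2 : MixedGraph V,
    H1.IsDirectedAncestral → H1.Maximal → (∀ i j, H1.adj i j ↔ skP ci i j) →
      UpStab H1.minLt ci → DownStab H1.minLt ci →
    H2.IsDirectedAncestral → H2.Maximal → (∀ i j, H2.adj i j ↔ skP ci i j) →
      UpStab H2.minLt ci → DownStab H2.minLt ci →
    H1.MarkovEquiv H2

/-- The DAG-uniqueness property: all DAGs with the skeleton of `ci` w.r.t. which `ci`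
satisfies ordered upward- and downward-stability are Markov equivalent. -/
def DAGUniquenessProp (ci : V → V → Set V → Prop) : Prop :=
  ∀ H1 H2 : MixedGraph V,
    H1.IsDAG → (∀ i j, H1.adj i j ↔ skP ci i j) →
      UpStab H1.minLt ci → DownStab H1.minLt ci →
    H2.IsDAG → (∀ i j, H2.adj i j ↔ skP ci i j) →
      UpStab H2.minLt ci → DownStab H2.minLt ci →
    H1.MarkovEquiv H2

end IndependenceRelations

/-! ## Probabilistic conditional independence of collections of variables -/

section Probabilistic

variable {V : Type} {Ω : Type} [MeasurableSpace Ω]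
  {𝓧 : V → Type}

/-- The tuple of variables `X_A`. -/
def restrictVars (X : ∀ v, Ω → 𝓧 v) (A : Set V) : Ω → ∀ a : A, 𝓧 a :=
  fun ω a => X a ω

variable [StandardBorelSpace Ω] [Nonempty Ω] [∀ v, MeasurableSpace (𝓧 v)]

theorem measurable_restrictVars {X : ∀ v, Ω → 𝓧 v} (hX : ∀ v, Measurable (X v))
    (A : Set V) : Measurable (restrictVars X A) :=
  measurable_pi_lambda _ fun a => hX a

/-- `⟨A,B|C⟩ ∈ J(P)` : the tuple `X_A` is conditionally independent of `X_B` given `X_C`. -/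
def CI (μ : Measure Ω) [IsFiniteMeasure μ] (X : ∀ v, Ω → 𝓧 v)
    (hX : ∀ v, Measurable (X v)) (A B C : Set V) : Prop :=
  CondIndepFun (MeasurableSpace.comap (restrictVars X C) MeasurableSpace.pi)
    (Measurable.comap_le (measurable_restrictVars hX C))
    (restrictVars X A) (restrictVars X B) μ

/-- Singleton conditional independence `i ⫫ j | C`. -/
def ciP (μ : Measure Ω) [IsFiniteMeasure μ] (X : ∀ v, Ω → 𝓧 v)
    (hX : ∀ v, Measurable (X v)) (i j : V) (C : Set V) : Prop :=
  CI μ X hX {i} {j} C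

/-- `P` is Markovian to `G` : `J(G) ⊆ J(P)`. -/
def Markovian (μ : Measure Ω) [IsFiniteMeasure μ] (X : ∀ v, Ω → 𝓧 v)
    (hX : ∀ v, Measurable (X v)) (G : MixedGraph V) : Prop :=
  ∀ A B C : Set V, Disjoint A B → Disjoint A C → Disjoint B C →
    G.mSep A B C → CI μ X hX A B C

/-- `P` and `G` are faithful : `J(G) = J(P)`. -/
def Faithful (μ : Measure Ω) [IsFiniteMeasure μ] (X : ∀ v, Ω → 𝓧 v)
    (hX : ∀ v, Measurable (X v)) (G : MixedGraph V) : Prop :=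
  ∀ A B C : Set V, Disjoint A B → Disjoint A C → Disjoint B C →
    (G.mSep A B C ↔ CI μ X hX A B C)

/-- `P` is converse pairwise Markovian to `G`. -/
def ConvPairwiseMarkov (μ : Measure Ω) [IsFiniteMeasure μ] (X : ∀ v, Ω → 𝓧 v)
    (hX : ∀ v, Measurable (X v)) (G : MixedGraph V) : Prop :=
  ∀ i j : V, i ≠ j → ciP μ X hX i j (G.anSet i j) → ¬ G.adj i j

end Probabilistic

section Skeletons

variable {V : Type} {G : MixedGraph V} {ci : V → V → Set V → Prop} {i j : V}

theorem MixedGraph.IsDirectedAncestral.ne_of_adj (hG : G.IsDirectedAncestral)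
    (hadj : G.adj i j) : i ≠ j := by
  obtain ⟨-, noArcLoop, -, -, acyclic, -⟩ := hG
  rintro rfl
  rcases hadj with harrow | harrow | harc
  · exact acyclic i (.single harrow)
  · exact acyclic i (.single harrow)
  · exact noArcLoop i harc

theorem skP_of_not_ci {S : Set V} (hne : i ≠ j)
    (hS : ∀ C, i ∉ C → j ∉ C → ci i j C → ci i j S) (hdep : ¬ ci i j S) : skP ci i j :=
  ⟨hne, fun ⟨C, hiC, hjC, hC⟩ => hdep (hS C hiC hjC hC)⟩

theorem MixedGraph.Maximal.adj_of_skP (hmax : G.Maximal)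
    (hMark : ∀ C, i ≠ j → i ∉ C → j ∉ C → G.mSep {i} {j} C → ci i j C)
    (hsk : skP ci i j) : G.adj i j := by
  obtain ⟨hne, hinsep⟩ := hsk
  by_contra hadj
  obtain ⟨C, hiC, hjC, hsep⟩ := hmax i j hne hadj
  exact hinsep ⟨C, hiC, hjC, hMark C hne hiC hjC hsep⟩

theorem Markovian.ciP_of_mSep {Ω : Type} [MeasurableSpace Ω] [StandardBorelSpace Ω] [Nonempty Ω]
    {μ : Measure Ω} [IsFiniteMeasure μ] {𝓧 : V → Type} [∀ v, MeasurableSpace (𝓧 v)]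
    {X : ∀ v, Ω → 𝓧 v} {hX : ∀ v, Measurable (X v)} (hMark : Markovian μ X hX G)
    {C : Set V} (hne : i ≠ j) (hiC : i ∉ C) (hjC : j ∉ C) (hsep : G.mSep {i} {j} C) :
    ciP μ X hX i j C :=
  hMark {i} {j} C (Set.disjoint_singleton.2 hne) (Set.disjoint_singleton_left.2 hiC)
    (Set.disjoint_singleton_left.2 hjC) hsep

end Skeletons

theorem statement_0_general {V : Type} {ci : V → V → Set V → Prop} {G0 : MixedGraph V}
    (hloop : ∀ i j, G0.adj i j → i ≠ j) (hmax : G0.Maximal)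
    (hMark : ∀ i j C, i ≠ j → i ∉ C → j ∉ C → G0.mSep {i} {j} C → ci i j C)
    (hconv : ∀ i j, i ≠ j → ci i j (G0.anSet i j) → ¬ G0.adj i j)
    (hb : ∀ i j C, i ≠ j → i ∉ C → j ∉ C → ci i j C → ci i j (G0.anSet i j)) (i j : V) :
    G0.adj i j ↔ skP ci i j := by
  refine ⟨fun hadj => ?_, hmax.adj_of_skP (hMark i j)⟩
  have hne : i ≠ j := hloop i j hadj
  have hdep : ¬ ci i j (G0.anSet i j) := fun hci => hconv i j hne hci hadj
  exact skP_of_not_ci hne (fun C => hb i j C hne) hdep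

/-- Lemma 3 of Sadeghi–Soo. -/
theorem statement_0 {V : Type} [Fintype V]
    {Ω : Type} [MeasurableSpace Ω] [StandardBorelSpace Ω] [Nonempty Ω]
    (μ : Measure Ω) [IsProbabilityMeasure μ]
    {𝓧 : V → Type} [∀ v, MeasurableSpace (𝓧 v)]
    (X : ∀ v, Ω → 𝓧 v) (hX : ∀ v, Measurable (X v))
    (G0 : MixedGraph V) (hanc : G0.IsDirectedAncestral) (hmax : G0.Maximal)
    (hMark : Markovian μ X hX G0)
    (hconv : ConvPairwiseMarkov μ X hX G0)
    (hb : ∀ (i j : V) (C : Set V), i ≠ j → i ∉ C → j ∉ C →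
      ciP μ X hX i j C → ciP μ X hX i j (G0.anSet i j)) :
    ∀ H : MixedGraph V, NaturalOutput (ciP μ X hX) H →
      ∀ i j, G0.adj i j ↔ H.adj i j :=
  fun _ hH i j => (statement_0_general (fun _ _ => hanc.ne_of_adj) hmax
    (fun _ _ _ => hMark.ciP_of_mSep) hconv hb i j).trans (hH.1 i j).symm
end

section
/- Suppose that a probability distribution P over variables (X_v)_{v∈V} is faithful to a maximal directed ancestral graph G_0. Then every output G(P) of a natural constraint-based structure-learning algorithm satisfies sk(G_0) = sk(G(P)). -/
open MeasureTheory ProbabilityTheory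

/-! An edge `i — j` is a connecting path given every `C`, as it has no inner node, so adjacent
nodes are never m-separated; maximality says that all other pairs are. Hence a maximal graph is
recovered from its singleton m-separations exactly as `sk(P)` is from the singleton conditional
independencies, and under faithfulness the two relations agree. -/

namespace MixedGraph

variable {V : Type} {G : MixedGraph V}

theorem IsDirectedAncestral.not_adj_self (hG : G.IsDirectedAncestral) (i : V) : ¬ G.adj i i := by
  obtain ⟨-, no_loop_arc, -, -, acyclic, -⟩ := hG
  rintro (harrow | harrow | harc)
  · exact acyclic i (.single harrow)
  · exact acyclic i (.single harrow)
  · exact no_loop_arc i harc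

theorem connecting_pair {i j : V} (hij : i ≠ j) (hadj : G.adj i j) (C : Set V) :
    G.Connecting C [i, j] := by
  refine ⟨by simpa using hij, List.isChain_pair.2 hadj, fun t ht _ _ hlt => ?_⟩
  simp only [List.length_cons, List.length_nil] at hlt
  omega

theorem not_mSep_of_adj {i j : V} (hij : i ≠ j) (hadj : G.adj i j) (C : Set V) :
    ¬ G.mSep {i} {j} C :=
  fun hsep => hsep ⟨[i, j], connecting_pair hij hadj C, ⟨i, rfl, rfl⟩, ⟨j, rfl, rfl⟩⟩

theorem Maximal.skP_mSep_iff (hmax : G.Maximal) {i j : V} :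
    skP (fun a b C => G.mSep {a} {b} C) i j ↔ i ≠ j ∧ G.adj i j := by
  refine and_congr_right fun hij => ⟨fun hno_sep => ?_, fun hadj => ?_⟩
  · by_contra hadj
    exact hno_sep (hmax i j hij hadj)
  · rintro ⟨C, -, -, hsep⟩
    exact not_mSep_of_adj hij hadj C hsep

/-- Faithfulness restricted to singletons, for an abstract independence relation `ci`: the
m-separations `i ⊥ j | C` of `G` are exactly the independencies `⟨i,j|C⟩`, compared on the
triples over which `skP` quantifies. -/
def SingletonFaithful (G : MixedGraph V) (ci : V → V → Set V → Prop) : Prop :=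
  ∀ ⦃i j : V⦄ ⦃C : Set V⦄, i ≠ j → i ∉ C → j ∉ C → (G.mSep {i} {j} C ↔ ci i j C)

theorem SingletonFaithful.skP_mSep_iff_skP {ci : V → V → Set V → Prop}
    (hfaith : G.SingletonFaithful ci) {i j : V} :
    skP (fun a b C => G.mSep {a} {b} C) i j ↔ skP ci i j :=
  and_congr_right fun hij => not_congr <| exists_congr fun _ =>
    and_congr_right fun hi => and_congr_right fun hj => hfaith hij hi hj

end MixedGraph

theorem Faithful.singletonFaithful {V Ω : Type} [MeasurableSpace Ω] [StandardBorelSpace Ω]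
    [Nonempty Ω] {μ : Measure Ω} [IsFiniteMeasure μ] {𝓧 : V → Type}
    [∀ v, MeasurableSpace (𝓧 v)] {X : ∀ v, Ω → 𝓧 v} {hX : ∀ v, Measurable (X v)}
    {G : MixedGraph V} (hfaith : Faithful μ X hX G) : G.SingletonFaithful (ciP μ X hX) :=
  fun i j C hij hi hj =>
    hfaith {i} {j} C (Set.disjoint_singleton.2 hij) (Set.disjoint_singleton_left.2 hi)
      (Set.disjoint_singleton_left.2 hj)

theorem statement_1_general {V : Type} {ci : V → V → Set V → Prop} {G₀ H : MixedGraph V}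
    (hloop : ∀ i, ¬ G₀.adj i i) (hmax : G₀.Maximal) (hfaith : G₀.SingletonFaithful ci)
    (hskel : ∀ i j, H.adj i j ↔ skP ci i j) (i j : V) : G₀.adj i j ↔ H.adj i j := by
  have hne (hadj : G₀.adj i j) : i ≠ j := by
    rintro rfl
    exact hloop i hadj
  calc G₀.adj i j ↔ i ≠ j ∧ G₀.adj i j := (and_iff_right_of_imp hne).symm
    _ ↔ skP (fun a b C => G₀.mSep {a} {b} C) i j := hmax.skP_mSep_iff.symm
    _ ↔ skP ci i j := hfaith.skP_mSep_iff_skP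
    _ ↔ H.adj i j := (hskel i j).symm

/-- Proposition 4 of Sadeghi–Soo. -/
theorem statement_1 {V : Type} [Fintype V]
    {Ω : Type} [MeasurableSpace Ω] [StandardBorelSpace Ω] [Nonempty Ω]
    (μ : Measure Ω) [IsProbabilityMeasure μ]
    {𝓧 : V → Type} [∀ v, MeasurableSpace (𝓧 v)]
    (X : ∀ v, Ω → 𝓧 v) (hX : ∀ v, Measurable (X v))
    (G0 : MixedGraph V) (hanc : G0.IsDirectedAncestral) (hmax : G0.Maximal)
    (hfaith : Faithful μ X hX G0) :
    ∀ H : MixedGraph V, NaturalOutput (ciP μ X hX) H →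
      ∀ i j, G0.adj i j ↔ H.adj i j :=
  fun _ hH => statement_1_general hanc.not_adj_self hmax hfaith.singletonFaithful hH.1
end

section
/- Suppose that a probability distribution P over variables (X_v)_{v∈V} is faithful to a directed ancestral graph G_0. If a directed ancestral graph G is Markov equivalent to G_0, then P satisfies ordered upward- and downward-stability w.r.t. G (i.e., w.r.t. the minimal order of G). -/
open MeasureTheory ProbabilityTheory

/-!
The independence statements of `P` are the m-separations of `G`, so both properties are facts about
connecting paths in `G`.

*Upward.* Adding to the conditioning set `C` ancestors of `i` can only open colliders. On a path
from `i` to `j` opened in this way, the last newly opened collider `m` is an ancestor of `i` but not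
of `C`; replacing the part of the path before `m` by a directed path from `m` to `i` gives a path
connecting given `C`.

*Downward.* A non-collider on a connecting path has an arrow leaving it along the path. Following
the arrows in that direction leads to an end of the path or to a collider, so every non-collider is
an ancestor of an endpoint or of `C`. Hence a node that is no such ancestor can be removed from
the conditioning set without opening a non-collider.
-/

namespace MixedGraph

variable {V : Type} {G : MixedGraph V} {A B C D K : Set V} {a b c i j k m : V} {l p q : List V}

section Simplicity

theorem IsDirectedAncestral.arc_symm (hG : G.IsDirectedAncestral) (i j : V) (h : G.arc i j) :
    G.arc j i :=
  (hG.1 i j).1 h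

theorem IsDirectedAncestral.not_headInto_of_arrow (hG : G.IsDirectedAncestral) (i j : V)
    (h : G.arrow i j) : ¬ G.headInto j i := by
  obtain ⟨hsymm, -, harrow, harc, -, -⟩ := hG
  rintro (hji | hji)
  exacts [harrow i j ⟨h, hji⟩, harc i j ⟨h, (hsymm i j).2 hji⟩]

end Simplicity

section Ancestors

/-- The smallest ancestral set containing `C`: the nodes of `C` together with their ancestors. -/
def ancestralClosure (G : MixedGraph V) (C : Set V) : Set V :=
  {b | ∃ c ∈ C, Relation.ReflTransGen G.arrow b c}

theorem mem_ancestralClosure_iff :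
    b ∈ G.ancestralClosure C ↔ b ∈ C ∨ ∃ c ∈ C, G.anc b c := by
  simp only [ancestralClosure, Set.mem_ofPred_eq, Relation.reflTransGen_iff_eq_or_transGen, anc,
    and_or_left, exists_or, exists_eq_right]

theorem ancestralClosure_mono (h : C ⊆ D) : G.ancestralClosure C ⊆ G.ancestralClosure D :=
  fun _ ⟨c, hc, hbc⟩ => ⟨c, h hc, hbc⟩

theorem ancestralClosure_union :
    G.ancestralClosure (C ∪ D) = G.ancestralClosure C ∪ G.ancestralClosure D := by
  ext b
  simp only [ancestralClosure, Set.mem_union, Set.mem_ofPred_eq, or_and_right, exists_or]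

theorem mem_ancestralClosure_of_reflTransGen (hab : Relation.ReflTransGen G.arrow a b)
    (hb : b ∈ G.ancestralClosure C) : a ∈ G.ancestralClosure C :=
  let ⟨c, hc, hbc⟩ := hb
  ⟨c, hc, hab.trans hbc⟩

end Ancestors

section ConnectingPaths

/-- The tripath `⟨a, b, c⟩` does not block a path given `C`: its inner node is a collider in the
ancestral closure of `C` or a non-collider outside `C`. -/
def OpenAt (G : MixedGraph V) (C : Set V) (a b c : V) : Prop :=
  (G.collider a b c → b ∈ G.ancestralClosure C) ∧ (¬ G.collider a b c → b ∉ C)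

theorem OpenAt.symm (h : G.OpenAt C a b c) : G.OpenAt C c b a :=
  ⟨fun hcol => h.1 hcol.symm, fun hcol => h.2 fun hcol' => hcol hcol'.symm⟩

theorem adj_symm (hsymm : ∀ i j, G.arc i j → G.arc j i) (h : G.adj a b) : G.adj b a := by
  rcases h with h | h | h
  exacts [.inr (.inl h), .inl h, .inr (.inr (hsymm _ _ h))]

theorem arrow_or_headInto_of_adj (hsymm : ∀ i j, G.arc i j → G.arc j i) (h : G.adj a b) :
    G.arrow a b ∨ G.headInto b a := by
  rcases h with h | h | h
  exacts [.inl h, .inr (.inl h), .inr (.inr (hsymm _ _ h))]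

theorem connecting_iff : G.Connecting C p ↔
    p.Nodup ∧ p.IsChain G.adj ∧ ∀ a b c, [a, b, c] <:+: p → G.OpenAt C a b c := by
  refine and_congr_right fun _ => and_congr_right fun _ => ⟨fun h a b c habc => ?_, ?_⟩
  · obtain ⟨s, t, rfl⟩ := habc
    have hopen := h (s.length + 1) (by omega) (by simp) (by simp)
      (by simp only [List.length_append, List.length_cons]; omega)
    simpa [OpenAt, mem_ancestralClosure_iff, Nat.add_assoc] using hopen
  · intro h t ht h1 h2 h3
    obtain ⟨s, rfl⟩ : ∃ s, t = s + 1 := ⟨t - 1, by omega⟩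
    have hinfix : [p[s], p[s + 1], p[s + 1 + 1]] <:+: p := by
      refine List.infix_iff_getElem?.2 ⟨s, by simp only [List.length_cons, List.length_nil]; omega,
        fun n hn => ?_⟩
      match n, hn with
      | 0, _ => simp
      | 1, _ => simp [Nat.add_comm 1 s, h2]
      | 2, _ => simp [Nat.add_comm 2 s, h3]
    simpa [OpenAt, mem_ancestralClosure_iff] using h _ _ _ hinfix

theorem connecting_singleton : G.Connecting C [a] :=
  ⟨List.nodup_singleton a, List.isChain_singleton a, fun t ht _ h2 _ => by
    simp only [List.length_singleton] at h2; omega⟩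

theorem Connecting.infix (h : G.Connecting C p) (hqp : q <:+: p) : G.Connecting C q := by
  rw [connecting_iff] at h ⊢
  exact ⟨h.1.sublist hqp.sublist, h.2.1.infix hqp, fun a b c habc => h.2.2 a b c (habc.trans hqp)⟩

theorem Connecting.cons (h : G.Connecting C (b :: l)) (ha : a ∉ b :: l) (hab : G.adj a b)
    (hopen : ∀ c ∈ l.head?, G.OpenAt C a b c) : G.Connecting C (a :: b :: l) := by
  rw [connecting_iff] at h ⊢
  refine ⟨List.nodup_cons.2 ⟨ha, h.1⟩, List.isChain_cons_cons.2 ⟨hab, h.2.1⟩, fun x y z hxyz => ?_⟩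
  rcases List.infix_cons_iff.1 hxyz with hprefix | hinfix
  · obtain ⟨t, ht⟩ := hprefix
    obtain ⟨rfl, rfl, rfl⟩ : x = a ∧ y = b ∧ z :: t = l := by simpa using ht
    exact hopen z rfl
  · exact h.2.2 x y z hinfix

theorem Connecting.reverse (hsymm : ∀ i j, G.arc i j → G.arc j i) (h : G.Connecting C p) :
    G.Connecting C p.reverse := by
  rw [connecting_iff] at h ⊢
  refine ⟨List.nodup_reverse.2 h.1, List.isChain_reverse.2 (h.2.1.imp fun _ _ => adj_symm hsymm),
    fun a b c habc => (h.2.2 c b a ?_).symm⟩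
  exact List.reverse_infix.1 (by simpa using habc)

end ConnectingPaths

section MConnection

/-- `a` and `b` are m-connected given `C`: some path between them is connecting given `C`. -/
def MConnected (G : MixedGraph V) (C : Set V) (a b : V) : Prop :=
  ∃ p : List V, G.Connecting C p ∧ p.head? = some a ∧ p.getLast? = some b

theorem mSep_iff : G.mSep A B C ↔ ∀ a ∈ A, ∀ b ∈ B, ¬ G.MConnected C a b := by
  simp only [mSep, MConnected]
  grind

theorem MConnected.symm (hsymm : ∀ i j, G.arc i j → G.arc j i) (h : G.MConnected C a b) :
    G.MConnected C b a := by
  obtain ⟨p, hp, ha, hb⟩ := h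
  exact ⟨p.reverse, hp.reverse hsymm, by simpa using hb, by simpa using ha⟩

theorem mSep_symm (hsymm : ∀ i j, G.arc i j → G.arc j i) (h : G.mSep A B C) : G.mSep B A C :=
  mSep_iff.2 fun b hb a ha hba => mSep_iff.1 h a ha b hb (hba.symm hsymm)

end MConnection

section Upward

-- The suffix `m :: l` starts at the last collider opened by `K` only.
theorem Connecting.of_union_or_exists_suffix (h : G.Connecting (C ∪ K) p) :
    G.Connecting C p ∨ ∃ m l, m :: l <:+ p ∧ G.Connecting C (m :: l) ∧
      m ∈ G.ancestralClosure K ∧ m ∉ G.ancestralClosure C := by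
  induction p with
  | nil => exact .inl (by simp [connecting_iff])
  | cons a p ih =>
    rcases ih (h.infix (List.suffix_cons a p).isInfix) with hp | ⟨m, l, hsuffix, hm⟩
    swap
    · exact .inr ⟨m, l, hsuffix.trans (List.suffix_cons a p), hm⟩
    cases p with
    | nil => exact .inl connecting_singleton
    | cons b l =>
      obtain ⟨hnodup, hchain, hopen⟩ := connecting_iff.1 h
      by_cases hb : b ∈ G.ancestralClosure K ∧ b ∉ G.ancestralClosure C
      · exact .inr ⟨b, l, List.suffix_cons a _, hp, hb⟩
      · refine .inl (hp.cons (List.nodup_cons.1 hnodup).1 (List.isChain_cons_cons.1 hchain).1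
          fun c hc => ?_)
        obtain ⟨l, rfl⟩ := List.head?_eq_some_iff.1 hc
        have habc := hopen a b c ⟨[], l, rfl⟩
        rw [OpenAt, ancestralClosure_union] at habc
        exact ⟨fun hcol => by_contra fun hbC => hb ⟨(habc.1 hcol).resolve_left hbC, hbC⟩,
          fun hcol hbC => habc.2 hcol (.inl hbC)⟩

theorem MConnected.of_reflTransGen (hsimple : ∀ i j, G.arrow i j → ¬ G.headInto j i)
    (hmi : Relation.ReflTransGen G.arrow m i) (hm : m ∉ G.ancestralClosure C)
    (h : G.MConnected C m j) : G.MConnected C i j := by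
  induction hmi using Relation.ReflTransGen.head_induction_on with
  | refl => exact h
  | @head m b hmb _ ih =>
    have hb : b ∉ G.ancestralClosure C := fun hb =>
      hm (mem_ancestralClosure_of_reflTransGen (.single hmb) hb)
    refine ih hb ?_
    obtain ⟨p, hp, hhead, hlast⟩ := h
    obtain ⟨l, rfl⟩ := List.head?_eq_some_iff.1 hhead
    by_cases hbl : b ∈ m :: l
    · obtain ⟨s, t, hst⟩ := List.append_of_mem hbl
      rw [hst] at hp hlast
      exact ⟨b :: t, hp.infix (List.suffix_append s _).isInfix, rfl, by simpa using hlast⟩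
    · have hmC : m ∉ C := fun hmC => hm (mem_ancestralClosure_iff.2 (.inl hmC))
      refine ⟨b :: m :: l, hp.cons hbl (.inr (.inl hmb)) fun c _ => ?_, rfl, by simpa using hlast⟩
      exact ⟨fun hcol => absurd hcol.1 (hsimple m b hmb), fun _ => hmC⟩

theorem mSep_union_of_subset_ancestralClosure
    (hsimple : ∀ i j, G.arrow i j → ¬ G.headInto j i) (h : G.mSep A B C)
    (hK : K ⊆ G.ancestralClosure A) : G.mSep A B (C ∪ K) := by
  rw [mSep_iff] at h ⊢
  rintro a ha b hb ⟨p, hp, hhead, hlast⟩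
  rcases hp.of_union_or_exists_suffix with hpC | ⟨m, l, ⟨s, rfl⟩, hml, ⟨k, hk, hmk⟩, hmC⟩
  · exact h a ha b hb ⟨p, hpC, hhead, hlast⟩
  · obtain ⟨a', ha', hma'⟩ := mem_ancestralClosure_of_reflTransGen hmk (hK hk)
    have hmb : G.MConnected C m b := ⟨m :: l, hml, rfl, by simpa using hlast⟩
    exact h a' ha' b hb (hmb.of_reflTransGen hsimple hma' hmC)

theorem upStab_mSep (hsymm : ∀ i j, G.arc i j → G.arc j i)
    (hsimple : ∀ i j, G.arrow i j → ¬ G.headInto j i) :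
    UpStab G.minLt fun i j C => G.mSep {i} {j} C := by
  have subset_of_anc {k i : V} (hki : G.anc k i) : {k} ⊆ G.ancestralClosure {i} :=
    Set.singleton_subset_iff.2 ⟨i, rfl, hki.to_reflTransGen⟩
  rintro i j C - - - h k - - (hki | hkj)
  · exact mSep_union_of_subset_ancestralClosure hsimple h (subset_of_anc hki)
  · exact mSep_symm hsymm
      (mSep_union_of_subset_ancestralClosure hsimple (mSep_symm hsymm h) (subset_of_anc hkj))

end Upward

section Downward

theorem Connecting.anc_of_arrow (hsymm : ∀ i j, G.arc i j → G.arc j i)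
    (h : G.Connecting C (a :: b :: l)) (hab : G.arrow a b) (hj : (b :: l).getLast? = some j) :
    G.anc a j ∨ ∃ c ∈ C, G.anc a c := by
  induction l generalizing a b with
  | nil =>
    obtain rfl : b = j := by simpa using hj
    exact .inl (.single hab)
  | cons c l ih =>
    obtain ⟨-, hchain, hopen⟩ := connecting_iff.1 h
    have hadj : G.adj b c := (List.isChain_cons_cons.1 (List.isChain_cons_cons.1 hchain).2).1
    rcases arrow_or_headInto_of_adj hsymm hadj with hbc | hcb
    · have hb := ih (h.infix (List.suffix_cons a _).isInfix) hbc (by simpa using hj)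
      exact hb.imp (.head hab) fun ⟨c, hc, hbc⟩ => ⟨c, hc, .head hab hbc⟩
    · obtain ⟨c, hc, hbc⟩ := (hopen a b c ⟨[], l, rfl⟩).1 ⟨.inl hab, hcb⟩
      exact .inr ⟨c, hc, .head' hab hbc⟩

theorem Connecting.anc_getLast_of_infix_of_arrow (hsymm : ∀ i j, G.arc i j → G.arc j i)
    (h : G.Connecting C p) (hlast : p.getLast? = some j) (hkc : [k, c] <:+: p)
    (harrow : G.arrow k c) : G.anc k j ∨ ∃ x ∈ C, G.anc k x := by
  obtain ⟨s, t, rfl⟩ := hkc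
  have hsuffix : k :: c :: t <:+ s ++ [k, c] ++ t := ⟨s, by simp⟩
  exact (h.infix hsuffix.isInfix).anc_of_arrow hsymm harrow (by simpa using hlast)

theorem Connecting.anc_of_not_collider (hsymm : ∀ i j, G.arc i j → G.arc j i)
    (h : G.Connecting C p) (hhead : p.head? = some i) (hlast : p.getLast? = some j)
    (hakc : [a, k, c] <:+: p) (hcol : ¬ G.collider a k c) :
    G.anc k i ∨ G.anc k j ∨ ∃ x ∈ C, G.anc k x := by
  have hchain : [a, k, c].IsChain G.adj := (connecting_iff.1 h).2.1.infix hakc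
  obtain ⟨hak, hkc⟩ : G.adj a k ∧ G.adj k c := by simpa using hchain
  have hreverse : [k, a] <:+: p.reverse :=
    .trans ⟨[c], [], by simp⟩ (List.reverse_infix.2 hakc)
  rcases arrow_or_headInto_of_adj hsymm (adj_symm hsymm hak) with hka | hak
  · have hlast' : p.reverse.getLast? = some i := by simpa using hhead
    exact ((h.reverse hsymm).anc_getLast_of_infix_of_arrow hsymm hlast' hreverse hka).imp_right .inr
  rcases arrow_or_headInto_of_adj hsymm hkc with hkc' | hck
  · exact .inr (h.anc_getLast_of_infix_of_arrow hsymm hlast (.trans ⟨[a], [], rfl⟩ hakc) hkc')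
  · exact absurd ⟨hak, hck⟩ hcol

theorem mSep_sdiff_of_forall_not_anc (hsymm : ∀ i j, G.arc i j → G.arc j i) (h : G.mSep A B C)
    (hK : ∀ k ∈ K, ∀ x ∈ A ∪ B ∪ C \ K, ¬ G.anc k x) : G.mSep A B (C \ K) := by
  rw [mSep_iff] at h ⊢
  rintro a ha b hb ⟨p, hp, hhead, hlast⟩
  obtain ⟨hnodup, hchain, hopen⟩ := connecting_iff.1 hp
  refine h a ha b hb ⟨p, connecting_iff.2 ⟨hnodup, hchain, fun x k y hxky => ?_⟩, hhead, hlast⟩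
  obtain ⟨hcollider, hnoncollider⟩ := hopen x k y hxky
  refine ⟨fun hcol => ancestralClosure_mono Set.sdiff_subset (hcollider hcol), fun hcol hkC => ?_⟩
  have hkK : k ∈ K := by_contra fun hkK => hnoncollider hcol ⟨hkC, hkK⟩
  rcases hp.anc_of_not_collider hsymm hhead hlast hxky hcol with hka | hkb | ⟨c, hc, hkc⟩
  · exact hK k hkK a (.inl (.inl ha)) hka
  · exact hK k hkK b (.inl (.inr hb)) hkb
  · exact hK k hkK c (.inr hc) hkc

theorem downStab_mSep (hsymm : ∀ i j, G.arc i j → G.arc j i) :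
    DownStab G.minLt fun i j C => G.mSep {i} {j} C := by
  rintro i j C - - - h k hki hkj hkC
  refine mSep_sdiff_of_forall_not_anc hsymm h ?_
  rintro _ rfl x ((rfl | rfl) | hx)
  exacts [hki, hkj, hkC x hx]

end Downward

end MixedGraph

section Transfer

variable {V : Type} {lt : V → V → Prop} {ci ci' : V → V → Set V → Prop}

theorem UpStab.congr (h : UpStab lt ci)
    (hci : ∀ i j C, i ≠ j → i ∉ C → j ∉ C → (ci i j C ↔ ci' i j C)) : UpStab lt ci' := by
  intro i j C hij hi hj hC k hki hkj hk
  rw [← hci i j C hij hi hj] at hC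
  exact (hci i j _ hij (by simp [hi, hki.symm]) (by simp [hj, hkj.symm])).1
    (h i j C hij hi hj hC k hki hkj hk)

theorem DownStab.congr (h : DownStab lt ci)
    (hci : ∀ i j C, i ≠ j → i ∉ C → j ∉ C → (ci i j C ↔ ci' i j C)) : DownStab lt ci' := by
  intro i j C hij hi hj hC k hik hjk hk
  rw [← hci i j C hij hi hj] at hC
  exact (hci i j _ hij (fun hi' => hi hi'.1) (fun hj' => hj hj'.1)).1
    (h i j C hij hi hj hC k hik hjk hk)

end Transfer

section Faithfulness

variable {V : Type} {Ω : Type} [MeasurableSpace Ω] [StandardBorelSpace Ω] [Nonempty Ω]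
  {μ : Measure Ω} [IsFiniteMeasure μ] {𝓧 : V → Type} [∀ v, MeasurableSpace (𝓧 v)]
  {X : ∀ v, Ω → 𝓧 v} {hX : ∀ v, Measurable (X v)} {G H : MixedGraph V}

theorem Faithful.of_markovEquiv (hG : Faithful μ X hX G) (hGH : G.MarkovEquiv H) :
    Faithful μ X hX H :=
  fun A B C hAB hAC hBC => (hGH A B C hAB hAC hBC).symm.trans (hG A B C hAB hAC hBC)

theorem Faithful.mSep_iff_ciP (hG : Faithful μ X hX G) (i j : V) (C : Set V) (hij : i ≠ j)
    (hi : i ∉ C) (hj : j ∉ C) : G.mSep {i} {j} C ↔ ciP μ X hX i j C :=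
  hG {i} {j} C (Set.disjoint_singleton.2 hij) (Set.disjoint_singleton_left.2 hi)
    (Set.disjoint_singleton_left.2 hj)

end Faithfulness

theorem statement_3_general {V : Type}
    {Ω : Type} [MeasurableSpace Ω] [StandardBorelSpace Ω] [Nonempty Ω]
    (μ : Measure Ω) [IsFiniteMeasure μ]
    {𝓧 : V → Type} [∀ v, MeasurableSpace (𝓧 v)]
    (X : ∀ v, Ω → 𝓧 v) (hX : ∀ v, Measurable (X v))
    (G0 : MixedGraph V) (hfaith : Faithful μ X hX G0)
    (G : MixedGraph V) (hsymm : ∀ i j, G.arc i j → G.arc j i)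
    (hsimple : ∀ i j, G.arrow i j → ¬ G.headInto j i)
    (hme : G0.MarkovEquiv G) :
    UpStab G.minLt (ciP μ X hX) ∧ DownStab G.minLt (ciP μ X hX) :=
  have hG : Faithful μ X hX G := hfaith.of_markovEquiv hme
  ⟨(MixedGraph.upStab_mSep hsymm hsimple).congr hG.mSep_iff_ciP,
    (MixedGraph.downStab_mSep hsymm).congr hG.mSep_iff_ciP⟩

/-- Proposition 6 of Sadeghi–Soo. -/
theorem statement_3 {V : Type} [Fintype V]
    {Ω : Type} [MeasurableSpace Ω] [StandardBorelSpace Ω] [Nonempty Ω]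
    (μ : Measure Ω) [IsProbabilityMeasure μ]
    {𝓧 : V → Type} [∀ v, MeasurableSpace (𝓧 v)]
    (X : ∀ v, Ω → 𝓧 v) (hX : ∀ v, Measurable (X v))
    (G0 : MixedGraph V) (hanc : G0.IsDirectedAncestral)
    (hfaith : Faithful μ X hX G0)
    (G : MixedGraph V) (hGanc : G.IsDirectedAncestral)
    (hme : G0.MarkovEquiv G) :
    UpStab G.minLt (ciP μ X hX) ∧ DownStab G.minLt (ciP μ X hX) :=
  statement_3_general μ X hX G0 hfaith G hGanc.arc_symm hGanc.not_headInto_of_arrow hme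
end
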